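/- Fix positive integers c and n, positive integers x₁,…,xₙ with d = x₁+⋯+xₙ, and equip the rectangle Δ of width c and height d with boundary data μ₁ = (c), μ₂ = (1,…,1) (c parts equal to 1), ν₁ = (x₁,…,xₙ), ν₂ = (d). Assume the genericity condition Σ_{i∈I} xᵢ ≠ Σ_{j∈J} xⱼ for all pairs of distinct subsets I, J ⊆ {1,…,n}. Then every λ-increasing lattice path γ from (0,d) to (c,0) in Δ with n+c+1 steps and mult(γ) ≠ 0 is equal to γ(A,B) for some admissible pair (A,B). -/

import Mathlib

open Classical

noncomputable section

namespace TropPaths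

/-- Lattice points of the plane. -/
abbrev Pt := ℤ × ℤ

/-- The order on `ℤ²` induced by `λ(x,y) = x - εy` for a small irrational `ε > 0`:
`p ≺ q` iff `p₁ < q₁`, or (`p₁ = q₁` and `p₂ > q₂`). -/
def lamLT (p q : Pt) : Prop := p.1 < q.1 ∨ (p.1 = q.1 ∧ q.2 < p.2)

/-- A lattice path, recorded as the list of its points, is `λ`-increasing. -/
def Increasing (γ : List Pt) : Prop := List.Chain' lamLT γ

/-- The determinant of two vectors in `ℤ²`. -/
def det (u v : Pt) : ℤ := u.1 * v.2 - u.2 * v.1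

/-- The `k`-th point of a path (junk value out of range). -/
def pt (γ : List Pt) (k : ℕ) : Pt := γ.getD k (0, 0)

/-- The `k`-th step vector of a path. -/
def stepAt (γ : List Pt) (k : ℕ) : Pt := pt γ (k + 1) - pt γ k

/-- The list of all step vectors of a path. -/
def steps (γ : List Pt) : List Pt := List.zipWith (fun a b => b - a) γ γ.tail

/-- The multiset of down steps `(0,-s)`, `s > 0`, of a path. -/
def downSteps (γ : List Pt) : Multiset Pt :=
  Multiset.filter (fun v => v.1 = 0 ∧ v.2 < 0) (steps γ : Multiset Pt)

/-- The multiset of up-right steps of a path. -/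
def upRightSteps (γ : List Pt) : Multiset Pt :=
  Multiset.filter (fun v => 0 < v.1 ∧ 0 < v.2) (steps γ : Multiset Pt)

/-- The path makes a turn of sign `s` at the (interior) index `k`; for left turns
`s = (0 < ·)`, for right turns `s = (· < 0)`. -/
def TurnAt (s : ℤ → Prop) (γ : List Pt) (k : ℕ) : Prop :=
  0 < k ∧ k + 1 < γ.length ∧ s (det (pt γ k - pt γ (k - 1)) (pt γ (k + 1) - pt γ k))

/-- `k` is the first turn of sign `s` of the path. -/
def FirstTurn (s : ℤ → Prop) (γ : List Pt) (k : ℕ) : Prop :=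
  TurnAt s γ k ∧ ∀ j, TurnAt s γ j → k ≤ j

/-- Twice the area of the triangle with vertices `γ(k-1), γ(k), γ(k+1)`. -/
def triArea2 (γ : List Pt) (k : ℕ) : ℕ :=
  (det (pt γ k - pt γ (k - 1)) (pt γ (k + 1) - pt γ k)).natAbs

/-- The path obtained by cutting the corner at index `k`, i.e. deleting the point `γ(k)`. -/
def cut (γ : List Pt) (k : ℕ) : List Pt := γ.eraseIdx k

/-- The path obtained by completing the parallelogram at index `k`, i.e. replacing
`γ(k)` by `γ(k-1) + γ(k+1) - γ(k)`. -/
def push (γ : List Pt) (k : ℕ) : List Pt :=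
  γ.set k (pt γ (k - 1) + pt γ (k + 1) - pt γ k)

/-- All points of the path lie in `Δ`. -/
def Inside (Δ : Set Pt) (γ : List Pt) : Prop := ∀ z ∈ γ, z ∈ Δ

/-- Mikhalkin's multiplicity recursion, as a functional relation: `MultRel Δ Init s γ m`
means that the recursion (performed always at the *first* turn of sign `s`) assigns the
multiplicity `m` to the path `γ`.  Here `Δ` is the set of lattice points of the polygon,
`Init` the set of initial paths (of multiplicity `1`), and `s` the turn sign
(`0 < ·` for left turns / `mult₊`, `· < 0` for right turns / `mult₋`). -/
inductive MultRel (Δ : Set Pt) (Init : List Pt → Prop) (s : ℤ → Prop) : List Pt → ℕ → Prop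
  | init {γ : List Pt} : Init γ → MultRel Δ Init s γ 1
  | noTurn {γ : List Pt} : ¬Init γ → (∀ k, ¬TurnAt s γ k) → MultRel Δ Init s γ 0
  | stepIn {γ : List Pt} {k m' m'' : ℕ} : ¬Init γ → FirstTurn s γ k →
      Inside Δ (push γ k) → MultRel Δ Init s (cut γ k) m' →
      MultRel Δ Init s (push γ k) m'' →
      MultRel Δ Init s γ (triArea2 γ k * m' + m'')
  | stepOut {γ : List Pt} {k m' : ℕ} : ¬Init γ → FirstTurn s γ k →
      ¬Inside Δ (push γ k) → MultRel Δ Init s (cut γ k) m' →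
      MultRel Δ Init s γ (triArea2 γ k * m')

/-- The multiplicity function determined by Mikhalkin's recursion. -/
def multOf (Δ : Set Pt) (Init : List Pt → Prop) (s : ℤ → Prop) (γ : List Pt) : ℕ :=
  if h : ∃ m, MultRel Δ Init s γ m then h.choose else 0

/-- `γ ≺ δ`: the path `δ` is obtained from `γ` by finitely many steps of the multiplicity
recursion (each step cuts the corner at the first turn of sign `s`, or completes the
parallelogram there). -/
inductive Reaches (Δ : Set Pt) (Init : List Pt → Prop) (s : ℤ → Prop) : List Pt → List Pt → Prop
  | refl (γ : List Pt) : Reaches Δ Init s γ γ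
  | cutStep {γ δ : List Pt} {k : ℕ} : ¬Init γ → FirstTurn s γ k →
      Reaches Δ Init s (cut γ k) δ → Reaches Δ Init s γ δ
  | pushStep {γ δ : List Pt} {k : ℕ} : ¬Init γ → FirstTurn s γ k →
      Inside Δ (push γ k) → Reaches Δ Init s (push γ k) δ → Reaches Δ Init s γ δ

/-- The lattice path starting at `p` with the given list of step vectors. -/
def pathFrom : Pt → List Pt → List Pt
  | p, [] => [p]
  | p, v :: vs => p :: pathFrom (p + v) vs

/-- Horizontal (rightward) steps of the given sizes. -/
def hSteps (l : List ℕ) : List Pt := l.map fun k => ((k : ℤ), 0)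

/-- Vertical downward steps of the given sizes. -/
def dSteps (l : List ℕ) : List Pt := l.map fun k => ((0 : ℤ), -(k : ℤ))

/-- A multiset of positive integers is a partition of `t`. -/
def IsPartition (m : Multiset ℕ) (t : ℕ) : Prop := (∀ k ∈ m, 0 < k) ∧ m.sum = t

/-! ## The rectangle `[0,c] × [0,d]` -/

/-- The lattice points of the rectangle with vertices `(0,0), (c,0), (0,d), (c,d)`. -/
def rect (c d : ℕ) : Set Pt := {z | 0 ≤ z.1 ∧ z.1 ≤ (c : ℤ) ∧ 0 ≤ z.2 ∧ z.2 ≤ (d : ℤ)}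

/-- `β₊`-initial paths of the rectangle: from `p = (0,d)` clockwise along the top edge with
step sizes the parts of `μ₂` and then down the right edge with step sizes the parts of `ν₂`. -/
def InitPlusRect (d : ℕ) (μ₂ ν₂ : Multiset ℕ) (γ : List Pt) : Prop :=
  ∃ s t : List ℕ, (s : Multiset ℕ) = μ₂ ∧ (t : Multiset ℕ) = ν₂ ∧
    γ = pathFrom (0, (d : ℤ)) (hSteps s ++ dSteps t)

/-- `β₋`-initial paths of the rectangle: from `p = (0,d)` counterclockwise down the left edge
with step sizes the parts of `ν₁` and then along the bottom edge with step sizes the parts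
of `μ₁`. -/
def InitMinusRect (d : ℕ) (μ₁ ν₁ : Multiset ℕ) (γ : List Pt) : Prop :=
  ∃ s t : List ℕ, (s : Multiset ℕ) = ν₁ ∧ (t : Multiset ℕ) = μ₁ ∧
    γ = pathFrom (0, (d : ℤ)) (dSteps s ++ hSteps t)

/-- `mult₊` for the rectangle with boundary data `(μ₁, μ₂, ν₁, ν₂)`. -/
def multPlusRect (c d : ℕ) (μ₂ ν₂ : Multiset ℕ) : List Pt → ℕ :=
  multOf (rect c d) (InitPlusRect d μ₂ ν₂) (fun x => 0 < x)

/-- `mult₋` for the rectangle with boundary data `(μ₁, μ₂, ν₁, ν₂)`. -/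
def multMinusRect (c d : ℕ) (μ₁ ν₁ : Multiset ℕ) : List Pt → ℕ :=
  multOf (rect c d) (InitMinusRect d μ₁ ν₁) (fun x => x < 0)

/-- `mult = mult₊ · mult₋` for the rectangle with boundary data `(μ₁, μ₂, ν₁, ν₂)`. -/
def multRect (c d : ℕ) (μ₁ μ₂ ν₁ ν₂ : Multiset ℕ) (γ : List Pt) : ℕ :=
  multPlusRect c d μ₂ ν₂ γ * multMinusRect c d μ₁ ν₁ γ

/-- A `λ`-increasing lattice path from `(0,d)` to `(c,0)` contained in the rectangle. -/
def IsPathRect (c d : ℕ) (γ : List Pt) : Prop :=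
  Increasing γ ∧ γ.head? = some (0, (d : ℤ)) ∧ γ.getLast? = some ((c : ℤ), 0) ∧
    Inside (rect c d) γ

/-- The genericity condition: all subset sums of the `xᵢ` are distinct. -/
def Generic {n : ℕ} (x : Fin n → ℕ) : Prop :=
  ∀ I J : Finset (Fin n), I ≠ J → ∑ i ∈ I, x i ≠ ∑ j ∈ J, x j

/-! ## Admissible pairs and the paths `γ(A,B)` -/

/-- An admissible pair `(A,B)`: pairwise disjoint sequences `A₀,…,A_{c-1}` in `{1,…,n}`
whose entries together partition `{1,…,n}`, and pairwise disjoint subsets `B₀,…,B_{c-1}`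
with union `{1,…,n}`, such that `B₀ ≠ ∅` and
`B_k ⊆ (A₀ ∪ ⋯ ∪ A_k) \ (B₀ ∪ ⋯ ∪ B_{k-1})` for all `k`. -/
def IsAdmissible {c n : ℕ} (A : Fin c → List (Fin n)) (B : Fin c → Finset (Fin n)) : Prop :=
  ((List.ofFn A).flatten : Multiset (Fin n)) = (Finset.univ : Finset (Fin n)).val ∧
  (∀ i : Fin n, ∃! k : Fin c, i ∈ B k) ∧
  (∀ k : Fin c, (k : ℕ) = 0 → (B k).Nonempty) ∧
  ∀ k : Fin c, B k ⊆
    (Finset.univ.filter fun i => ∃ j : Fin c, j ≤ k ∧ i ∈ A j) \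
      (Finset.univ.filter fun i => ∃ j : Fin c, j < k ∧ i ∈ B j)

/-- The steps of `γ(A,B)` in the column `x = k`: down steps of sizes `xᵢ`, `i ∈ A_k`, in
order, followed by the step `(1, Σ_{i ∈ B_k} xᵢ)` to the next column. -/
def colSteps {c n : ℕ} (x : Fin n → ℕ) (A : Fin c → List (Fin n))
    (B : Fin c → Finset (Fin n)) (k : Fin c) : List Pt :=
  ((A k).map fun i => ((0 : ℤ), -(x i : ℤ))) ++ [((1 : ℤ), ∑ i ∈ B k, (x i : ℤ))]

/-- The lattice path `γ(A,B)` associated to an admissible pair, from `(0,d)` to `(c,0)`,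
whose last step is the full right edge. -/
def gammaAB {c n : ℕ} (x : Fin n → ℕ) (A : Fin c → List (Fin n))
    (B : Fin c → Finset (Fin n)) : List Pt :=
  pathFrom (0, ((∑ i, x i : ℕ) : ℤ))
    ((List.ofFn (colSteps x A B)).flatten ++ [((0 : ℤ), -((∑ i, x i : ℕ) : ℤ))])

/-! ## The trapezoid of Lemma 4.? -/

/-- The lattice points of the trapezoid with vertices `(0,0), (0,a), (1,a), (1,b)`. -/
def trap (a b : ℕ) : Set Pt :=
  {z | 0 ≤ z.1 ∧ z.1 ≤ 1 ∧ (b : ℤ) * z.1 ≤ z.2 ∧ z.2 ≤ (a : ℤ)}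

/-- `β₊`-initial paths of the trapezoid: one step of lattice length 1 along the top edge,
then down the right edge with step sizes the parts of `βright`. -/
def InitPlusTrap (a : ℕ) (βright : Multiset ℕ) (γ : List Pt) : Prop :=
  ∃ t : List ℕ, (t : Multiset ℕ) = βright ∧
    γ = pathFrom (0, (a : ℤ)) (((1 : ℤ), (0 : ℤ)) :: dSteps t)

/-! ## Automorphisms of a partition -/

/-- `|Aut ν| = ∏_k m_k(ν)!` where `m_k(ν)` is the number of parts of `ν` equal to `k`. -/
def autCard (m : Multiset ℕ) : ℕ :=
  (m.dedup.map fun k => (m.count k).factorial).prod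

/-- A step of a `λ`-increasing path. -/
def VS (u : Pt) : Prop := 0 < u.1 ∨ (u.1 = 0 ∧ u.2 < 0)

/-- A successful branch of the multiplicity recursion, on step lists. -/
inductive Good (I : List Pt → Prop) (s : ℤ → Prop) : List Pt → Prop
  | init (σ : List Pt) : I σ → Good I s σ
  | cut (a : List Pt) (u v : Pt) (b : List Pt) : VS u → VS v → s (det u v) →
      ((u :: v :: b).map Prod.snd).sum ≤ 0 → Good I s (a ++ (u + v) :: b) →
      Good I s (a ++ u :: v :: b)
  | push (a : List Pt) (u v : Pt) (b : List Pt) : VS u → VS v → s (det u v) →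
      ((u :: v :: b).map Prod.snd).sum ≤ 0 → Good I s (a ++ v :: u :: b) →
      Good I s (a ++ u :: v :: b)

theorem steps_cons_cons (p q : Pt) (t : List Pt) :
    steps (p :: q :: t) = (q - p) :: steps (q :: t) := by
  simp [steps]

theorem steps_append (a : List Pt) (p : Pt) (t : List Pt) :
    steps (a ++ p :: t) = steps (a ++ [p]) ++ steps (p :: t) := by
  induction a with
  | nil => simp [steps]
  | cons x a ih =>
    cases a with
    | nil => simp [steps]
    | cons y a =>
      simp only [List.cons_append, steps_cons_cons] at ih ⊢
      rw [ih]

theorem steps_sum (p : Pt) (t : List Pt) (z : Pt) (h : (p :: t).getLast? = some z) :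
    ((steps (p :: t)).map Prod.snd).sum = z.2 - p.2 := by
  induction t generalizing p with
  | nil => simp at h; simp [steps, h]
  | cons q t ih =>
    rw [steps_cons_cons]
    have := ih q (by simpa using h)
    simp only [List.map_cons, List.sum_cons, this, Prod.snd_sub]
    ring

theorem pathFrom_steps (p : Pt) (t : List Pt) : pathFrom p (steps (p :: t)) = p :: t := by
  induction t generalizing p with
  | nil => simp [steps, pathFrom]
  | cons q t ih => rw [steps_cons_cons]; simp [pathFrom, ih]

theorem steps_pathFrom (p : Pt) (σ : List Pt) : steps (pathFrom p σ) = σ := by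
  induction σ generalizing p with
  | nil => simp [pathFrom, steps]
  | cons v σ ih =>
    cases σ with
    | nil => simp [pathFrom, steps]
    | cons w σ =>
      have := ih (p + v)
      simp only [pathFrom] at this ⊢
      rw [steps_cons_cons, this]; simp

theorem steps_length (p : Pt) (t : List Pt) : (steps (p :: t)).length = t.length := by
  simp [steps]

theorem turn_decomp (s : ℤ → Prop) (γ : List Pt) (k : ℕ) (h : TurnAt s γ k) :
    ∃ a p q r b, γ = a ++ p :: q :: r :: b ∧ k = a.length + 1 ∧ s (det (q - p) (r - q)) ∧
      cut γ k = a ++ p :: r :: b ∧ push γ k = a ++ p :: (p + r - q) :: r :: b := by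
  obtain ⟨h0, h1, h2⟩ := h
  obtain ⟨j, rfl⟩ : ∃ j, k = j + 1 := ⟨k - 1, by omega⟩
  have hd : γ = γ.take j ++ γ[j] :: γ[j+1] :: γ[j+1+1] :: γ.drop (j+3) := by
    conv_lhs => rw [← List.take_append_drop j γ]
    rw [List.drop_eq_getElem_cons (by omega), List.drop_eq_getElem_cons (by omega),
      List.drop_eq_getElem_cons (by omega)]
  have hl : (γ.take j).length = j := by simp; omega
  have e0 : pt γ j = γ[j] := by simp [pt, List.getD_eq_getElem?_getD, List.getElem?_eq_getElem (show j < γ.length by omega)]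
  have e1 : pt γ (j+1) = γ[j+1] := by simp [pt, List.getD_eq_getElem?_getD, List.getElem?_eq_getElem (show j + 1 < γ.length by omega)]
  have e2 : pt γ (j+1+1) = γ[j+1+1] := by simp [pt, List.getD_eq_getElem?_getD, List.getElem?_eq_getElem (show j + 1 + 1 < γ.length by omega)]
  refine ⟨γ.take j, γ[j], γ[j+1], γ[j+1+1], γ.drop (j+3), hd, by rw [hl], ?_, ?_, ?_⟩
  · simpa [e0, e1, e2] using h2
  · unfold cut
    generalize γ[j] = p at *
    generalize γ[j+1] = q at *
    generalize γ[j+1+1] = r at *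
    generalize γ.take j = a at *
    generalize γ.drop (j+3) = b at *
    subst hd
    rw [List.eraseIdx_append_of_length_le (by omega)]
    simp [hl]
  · unfold push
    simp only [Nat.add_sub_cancel, e0, e1, e2]
    generalize γ[j] = p at *
    generalize γ[j+1] = q at *
    generalize γ[j+1+1] = r at *
    generalize γ.take j = a at *
    generalize γ.drop (j+3) = b at *
    subst hd
    rw [List.set_append_right _ _ (by omega)]
    simp [hl]

theorem VS_add {s : ℤ → Prop} {u v : Pt} (hu : VS u) (hv : VS v) : VS (u + v) := by
  unfold VS at *
  simp only [Prod.fst_add, Prod.snd_add]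
  omega

theorem bridge {Δ : Set Pt} (hΔ : ∀ z ∈ Δ, 0 ≤ z.2) {Init : List Pt → Prop} {s : ℤ → Prop}
    {I : List Pt → Prop} (hI : ∀ γ, Init γ → I (steps γ)) {γ : List Pt} {m : ℕ}
    (h : MultRel Δ Init s γ m) (hm : m ≠ 0) (hin : Inside Δ γ) (z : Pt)
    (hz : γ.getLast? = some z) (hz0 : z.2 = 0)
    (hV : ∀ u ∈ steps γ, VS u) : Good I s (steps γ) := by
  have key : ∀ a p q r b, Inside Δ (a ++ p :: q :: r :: b) →
      (a ++ p :: q :: r :: b).getLast? = some z →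
      (((q - p) :: (r - q) :: steps (r :: b)).map Prod.snd).sum ≤ 0 := by
    intro a p q r b hi hl
    rw [← steps_cons_cons, ← steps_cons_cons, steps_sum p _ z (by simpa using hl), hz0]
    have := hΔ p (hi p (by simp))
    omega
  have hcut : ∀ γ k, TurnAt s γ k → Inside Δ γ → γ.getLast? = some z →
      (∀ u ∈ steps γ, VS u) →
      (Inside Δ (cut γ k) → (cut γ k).getLast? = some z → (∀ u ∈ steps (cut γ k), VS u) →
        Good I s (steps (cut γ k))) → Good I s (steps γ) := by
    intro γ k ht hi hl hV ih
    obtain ⟨a, p, q, r, b, rfl, -, hs, hc, -⟩ := turn_decomp s γ k ht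
    rw [hc] at ih
    have e : steps (a ++ p :: q :: r :: b)
        = steps (a ++ [p]) ++ (q - p) :: (r - q) :: steps (r :: b) := by
      rw [steps_append, steps_cons_cons, steps_cons_cons]
    have e' : steps (a ++ p :: r :: b)
        = steps (a ++ [p]) ++ ((q - p) + (r - q)) :: steps (r :: b) := by
      rw [steps_append, steps_cons_cons]; congr 2; abel
    rw [e] at hV ⊢
    have v1 := hV (q - p) (by simp)
    have v2 := hV (r - q) (by simp)
    refine Good.cut _ _ _ _ v1 v2 hs (key a p q r b hi hl) ?_
    rw [e'] at ih
    refine ih ?_ ?_ ?_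
    · intro w hw; apply hi; simp at hw ⊢; tauto
    · simpa using hl
    · intro w hw
      rw [List.mem_append, List.mem_cons] at hw
      rcases hw with hw | rfl | hw
      · exact hV _ (by simp [hw])
      · exact VS_add (s := s) v1 v2
      · exact hV _ (by simp [hw])
  induction h with
  | init h => exact Good.init _ (hI _ h)
  | noTurn => exact absurd rfl hm
  | @stepIn γ k m' m'' hni ht hp h1 h2 ih1 ih2 =>
    by_cases h0 : m'' = 0
    · subst h0
      refine hcut γ k ht.1 hin hz hV (ih1 ?_)
      rintro rfl; simp at hm
    · obtain ⟨a, p, q, r, b, rfl, -, hs, -, hc⟩ := turn_decomp s γ k ht.1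
      rw [hc] at ih2 hp
      have e : steps (a ++ p :: q :: r :: b)
          = steps (a ++ [p]) ++ (q - p) :: (r - q) :: steps (r :: b) := by
        rw [steps_append, steps_cons_cons, steps_cons_cons]
      have e' : steps (a ++ p :: (p + r - q) :: r :: b)
          = steps (a ++ [p]) ++ (r - q) :: (q - p) :: steps (r :: b) := by
        rw [steps_append, steps_cons_cons, steps_cons_cons]; congr 2
        · abel
        · congr 1; abel
      rw [e] at hV ⊢
      refine Good.push _ _ _ _ (hV _ (by simp)) (hV _ (by simp)) hs (key a p q r b hin hz) ?_
      rw [e'] at ih2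
      refine ih2 h0 hp ?_ ?_
      · simpa using hz
      · intro w hw; apply hV; simp at hw ⊢; tauto
  | @stepOut γ k m' hni ht hp h1 ih1 =>
    refine hcut γ k ht.1 hin hz hV (ih1 ?_)
    rintro rfl; simp at hm

theorem multOf_ne {Δ : Set Pt} {Init : List Pt → Prop} {s : ℤ → Prop} {γ : List Pt}
    (h : multOf Δ Init s γ ≠ 0) : ∃ m, MultRel Δ Init s γ m ∧ m ≠ 0 := by
  unfold multOf at h
  split_ifs at h with h'
  · exact ⟨_, h'.choose_spec, h⟩
  · exact absurd rfl h

theorem dSteps_eq (s : List ℕ) : dSteps s = s.map (fun k : ℕ => ((0 : ℤ), -(k : ℤ))) := by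
  induction s with
  | nil => rfl
  | cons k s ih => simpa [dSteps] using ih

theorem hSteps_eq (s : List ℕ) : hSteps s = s.map (fun k : ℕ => ((k : ℤ), (0 : ℤ))) := by
  induction s with
  | nil => rfl
  | cons k s ih => simpa [hSteps] using ih

theorem left_turn {u v : Pt} (hu : VS u) (hv : VS v) (h : 0 < det u v) : 0 < v.1 := by
  rcases hv with hv | ⟨h1, h2⟩
  · exact hv
  · exfalso
    unfold det at h; rw [h1] at h
    rcases hu with hu | ⟨h3, h4⟩
    · nlinarith
    · rw [h3] at h; simp at h

theorem right_turn {u v : Pt} (hu : VS u) (hv : VS v) (h : det u v < 0) : 0 < u.1 := by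
  rcases hu with hu | ⟨h1, h2⟩
  · exact hu
  · exfalso
    unfold det at h; rw [h1] at h
    rcases hv with hv | ⟨h3, h4⟩
    · nlinarith
    · rw [h3] at h; simp at h

/-- Step lists of the `β₊`-initial path. -/
def IPlus (c d : ℕ) (σ : List Pt) : Prop :=
  σ = List.replicate c ((1 : ℤ), (0 : ℤ)) ++ [((0 : ℤ), -(d : ℤ))]

/-- Step lists of the `β₋`-initial paths. -/
def IMinus {n : ℕ} (c : ℕ) (x : Fin n → ℕ) (σ : List Pt) : Prop :=
  ∃ s : List ℕ, (s : Multiset ℕ) = ((List.ofFn x : List ℕ) : Multiset ℕ) ∧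
    σ = dSteps s ++ [((c : ℤ), (0 : ℤ))]

abbrev GP (c d : ℕ) : List Pt → Prop := Good (IPlus c d) (fun z => 0 < z)
abbrev GM {n : ℕ} (c : ℕ) (x : Fin n → ℕ) : List Pt → Prop := Good (IMinus c x) (fun z => z < 0)

theorem VS_nonneg {u : Pt} (h : VS u) : 0 ≤ u.1 := by unfold VS at h; omega

theorem gp_bounds {c d : ℕ} {σ : List Pt} (h : GP c d σ) :
    (∀ u ∈ σ, u.1 ≤ 1 ∧ (0 < u.1 → 0 ≤ u.2)) ∧ (σ.map Prod.fst).sum = c := by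
  induction h with
  | init σ h =>
    subst h
    refine ⟨?_, by simp⟩
    intro u hu
    simp only [List.mem_append, List.mem_replicate, List.mem_singleton] at hu
    rcases hu with ⟨-, rfl⟩ | rfl <;> simp
  | cut a u v b hu hv hd _ _ ih =>
    obtain ⟨ih1, ih2⟩ := ih
    refine ⟨?_, ?_⟩
    · intro w hw
      have h1 := ih1 (u + v) (by simp)
      have hv' := left_turn hu hv hd
      have hu' := VS_nonneg hu
      simp only [Prod.fst_add, Prod.snd_add] at h1
      simp only [List.mem_append, List.mem_cons] at hw
      rcases hw with hw | rfl | rfl | hw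
      · exact ih1 w (by simp [hw])
      · omega
      · unfold VS at hu; omega
      · exact ih1 w (by simp [hw])
    · rw [← ih2]; simp; ring
  | push a u v b hu hv hd _ _ ih =>
    obtain ⟨ih1, ih2⟩ := ih
    refine ⟨?_, ?_⟩
    · intro w hw; apply ih1; simp at hw ⊢; tauto
    · rw [← ih2]; simp; ring

theorem gp_zero {c d : ℕ} {σ : List Pt} (h : GP c d σ) :
    (∀ u ∈ σ, 0 < u.1 → u.2 ≤ 0) → σ.length = c + 1 := by
  induction h with
  | init σ h => subst h; simp
  | cut a u v b hu hv hd _ hg ih =>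
    intro H
    exfalso
    have h1 := (gp_bounds hg).1 (u + v) (by simp)
    have hv' := left_turn hu hv hd
    have h2 := H v (by simp) hv'
    simp only [Prod.fst_add, Prod.snd_add] at h1
    unfold VS at hu; omega
  | push a u v b hu hv hd _ hg ih =>
    intro H
    rw [← ih]
    · simp
    · intro w hw; apply H; simp at hw ⊢; tauto

theorem gp_c1 {c d : ℕ} {σ : List Pt} (h : GP c d σ) (hV : ∀ u ∈ σ, VS u)
    (hl : σ.length ≠ c + 1) (hm : ((1 : ℤ), (0 : ℤ)) ∈ σ) : c ≠ 1 := by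
  rintro rfl
  apply hl
  apply gp_zero h
  obtain ⟨s, t, rfl⟩ := List.append_of_mem hm
  have hs := (gp_bounds h).2
  have nn : ∀ r : List Pt, (∀ u ∈ r, VS u) → 0 ≤ (r.map Prod.fst).sum := by
    intro r hr
    apply List.sum_nonneg
    intro z hz
    obtain ⟨u, hu, rfl⟩ := List.mem_map.1 hz
    exact VS_nonneg (hr u hu)
  have nn2 : ∀ r : List Pt, (∀ u ∈ r, VS u) → ∀ u ∈ r, u.1 ≤ (r.map Prod.fst).sum := by
    intro r hr u hu
    obtain ⟨s, t, rfl⟩ := List.append_of_mem hu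
    have h1 := nn s (fun w hw => hr w (by simp [hw]))
    have h2 := nn t (fun w hw => hr w (by simp [hw]))
    simp; omega
  have Vs : ∀ u ∈ s, VS u := fun w hw => hV w (by simp [hw])
  have Vt : ∀ u ∈ t, VS u := fun w hw => hV w (by simp [hw])
  have a1 := nn s Vs
  have a2 := nn t Vt
  simp at hs
  intro u hu hu0
  simp only [List.mem_append, List.mem_cons] at hu
  rcases hu with hu | rfl | hu
  · have := nn2 s Vs u hu; omega
  · simp
  · have := nn2 t Vt u hu; omega

theorem gm_last {n c : ℕ} {x : Fin n → ℕ} {σ : List Pt} (h : GM c x σ) :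
    ∀ l, σ = l ++ [((1 : ℤ), (0 : ℤ))] → c = 1 := by
  induction h with
  | init σ h =>
    obtain ⟨s, -, rfl⟩ := h
    intro l hl
    have := (List.append_inj' hl rfl).2
    simp at this; omega
  | cut a u v b hu hv hd hs _ ih =>
    intro l hl
    rcases List.eq_nil_or_concat b with rfl | ⟨b', e, rfl⟩
    · exfalso
      have : v = (1, 0) := by
        have := congrArg List.getLast? hl
        simpa using this
      subst this
      simp [det] at hd hs; omega
    · refine ih (a ++ (u + v) :: b') ?_
      have : e = (1, 0) := by
        have := congrArg List.getLast? hl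
        simpa [List.getLast?_cons] using this
      simp [this]
  | push a u v b hu hv hd hs _ ih =>
    intro l hl
    rcases List.eq_nil_or_concat b with rfl | ⟨b', e, rfl⟩
    · exfalso
      have : v = (1, 0) := by
        have := congrArg List.getLast? hl
        simpa using this
      subst this
      simp [det] at hd hs; omega
    · refine ih (a ++ v :: u :: b') ?_
      have : e = (1, 0) := by
        have := congrArg List.getLast? hl
        simpa [List.getLast?_cons] using this
      simp [this]

theorem gm_first {n c : ℕ} {x : Fin n → ℕ} {σ : List Pt} (hc : 0 < c) (h : GM c x σ) :
    ∀ u t, σ = u :: t → u.1 = 0 → ∃ i, u = ((0 : ℤ), -(x i : ℤ)) := by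
  induction h with
  | init σ h =>
    obtain ⟨s, hs, rfl⟩ := h
    intro u t hl hu
    cases s with
    | nil => simp [dSteps] at hl; rw [← hl.1] at hu; simp at hu; omega
    | cons k s =>
      have hk : k ∈ (((k :: s : List ℕ)) : Multiset ℕ) := by simp
      rw [hs] at hk
      simp [dSteps] at hk hl
      obtain ⟨i, rfl⟩ := hk
      exact ⟨i, hl.1.symm⟩
  | cut a u v b hu hv hd hs _ ih =>
    intro w t hl hw
    cases a with
    | nil =>
      have := right_turn hu hv hd
      simp at hl; rw [hl.1] at this; omega
    | cons w' a =>
      simp only [List.cons_append, List.cons.injEq] at hl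
      exact ih w _ (by rw [hl.1]; rfl) hw
  | push a u v b hu hv hd hs _ ih =>
    intro w t hl hw
    cases a with
    | nil =>
      have := right_turn hu hv hd
      simp at hl; rw [hl.1] at this; omega
    | cons w' a =>
      simp only [List.cons_append, List.cons.injEq] at hl
      exact ih w _ (by rw [hl.1]; rfl) hw

/-- The first right step. -/
def fr (σ : List Pt) : Option Pt := σ.find? (fun u => decide (0 < u.1))

theorem gm_slope {n c : ℕ} {x : Fin n → ℕ} {σ : List Pt} (h : GM c x σ) :
    ∀ w, fr σ = some w → (w.2 < 0 ∨ (w.2 = 0 ∧ w.1 = 1)) → c = 1 := by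
  induction h with
  | init σ h =>
    obtain ⟨s, hs, rfl⟩ := h
    intro w hw hp
    have e : (dSteps s).find? (fun u => decide (0 < u.1)) = none := by
      simp [dSteps]
    rw [fr, List.find?_append, e] at hw
    simp [List.find?_cons] at hw
    split at hw <;> simp_all
    subst hw; simp at hp; omega
  | cut a u v b hu hv hd hs _ ih =>
    intro w hw hp
    have hu' := right_turn hu hv hd
    rw [fr, List.find?_append, List.find?_cons_of_pos (by simpa using hu')] at hw
    rw [fr, List.find?_append, List.find?_cons_of_pos
      (by have := VS_nonneg hv; simp; omega)] at ih
    cases e : a.find? (fun u => decide (0 < u.1)) with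
    | some z => rw [e] at hw ih; exact ih w (by simpa using hw) hp
    | none =>
      rw [e] at hw ih
      simp at hw; subst hw
      refine ih (u + v) (by simp) (Or.inl ?_)
      simp only [Prod.snd_add]
      unfold det at hd
      rcases hv with hv | ⟨h1, h2⟩
      · rcases hp with hp | ⟨hp, hp'⟩
        · by_contra hh; push Not at hh
          nlinarith
        · rw [hp, hp'] at hd; omega
      · omega
  | push a u v b hu hv hd hs _ ih =>
    intro w hw hp
    have hu' := right_turn hu hv hd
    rw [fr, List.find?_append, List.find?_cons_of_pos (by simpa using hu')] at hw
    rw [fr, List.find?_append] at ih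
    cases e : a.find? (fun u => decide (0 < u.1)) with
    | some z => rw [e] at hw ih; exact ih w (by simpa using hw) hp
    | none =>
      rw [e] at hw ih
      simp at hw; subst hw
      by_cases hv1 : 0 < v.1
      · rw [List.find?_cons_of_pos (by simpa using hv1)] at ih
        refine ih v (by simp) (Or.inl ?_)
        unfold det at hd
        rcases hp with hp | ⟨hp, hp'⟩
        · by_contra hh; push Not at hh
          nlinarith
        · rw [hp, hp'] at hd; omega
      · rw [List.find?_cons_of_neg (by simpa using hv1),
          List.find?_cons_of_pos (by simpa using hu')] at ih
        exact ih u (by simp) hp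

/-- The down steps. -/
def dn (σ : List Pt) : List Pt := σ.filter (fun u => decide (u.1 = 0))

theorem gm_dn {n c : ℕ} {x : Fin n → ℕ} {σ : List Pt} (hc : 0 < c) (h : GM c x σ) :
    (dSteps (List.ofFn x)).Subperm (dn σ) := by
  induction h with
  | init σ h =>
    obtain ⟨s, hs, rfl⟩ := h
    have hp : s.Perm (List.ofFn x) := Multiset.coe_eq_coe.1 hs
    have e : dn (dSteps s ++ [((c : ℤ), (0 : ℤ))]) = dSteps s := by
      unfold dn
      rw [List.filter_append, List.filter_eq_self.2 (by simp [dSteps]),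
        List.filter_cons_of_neg (by simp; omega)]
      simp
    rw [e]
    rw [dSteps_eq, dSteps_eq]
    exact (hp.symm.map _).subperm
  | cut a u v b hu hv hd hs _ ih =>
    refine ih.trans (List.Sublist.subperm ?_)
    have hu' := right_turn hu hv hd
    unfold dn
    rw [List.filter_append, List.filter_append, List.filter_cons_of_neg
      (by have := VS_nonneg hv; simp; omega)]
    refine List.Sublist.append (List.Sublist.refl _) (List.Sublist.filter _ ?_)
    exact ((List.Sublist.refl b).cons v).cons u
  | push a u v b hu hv hd hs _ ih =>
    refine ih.trans (List.Perm.subperm ?_)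
    exact ((List.Perm.swap u v b).append_left a).filter _

/-- Labelled steps. -/
abbrev Lab (n : ℕ) := Fin n ⊕ Finset (Fin n)

/-- The step vector of a labelled step. -/
def real {n : ℕ} (x : Fin n → ℕ) : Lab n → Pt
  | Sum.inl i => ((0 : ℤ), -(x i : ℤ))
  | Sum.inr B => ((1 : ℤ), ∑ i ∈ B, (x i : ℤ))

/-- Whether a labelled step mentions `i`, and how. -/
def mention {n : ℕ} (i : Fin n) : Lab n → Option Bool
  | Sum.inl j => if i = j then some true else none
  | Sum.inr B => if i ∈ B then some false else none

/-- All mentions of `i`. -/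
def fm {n : ℕ} (i : Fin n) (L : List (Lab n)) : List Bool := L.filterMap (mention i)

theorem fm_append {n : ℕ} (i : Fin n) (L M : List (Lab n)) : fm i (L ++ M) = fm i L ++ fm i M := by
  simp [fm]

theorem fm_cons {n : ℕ} (i : Fin n) (l : Lab n) (M : List (Lab n)) :
    fm i (l :: M) = (mention i l).toList ++ fm i M := by
  unfold fm
  rw [List.filterMap_cons]
  cases mention i l <;> simp

/-- Each label is unused, or first a down step and later in a right step. -/
def ValidL {n : ℕ} (L : List (Lab n)) : Prop := ∀ i, fm i L = [] ∨ fm i L = [true, false]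

theorem mem_of_fm {n : ℕ} {i : Fin n} {L : List (Lab n)} (h : true ∈ fm i L) :
    Sum.inl i ∈ L := by
  unfold fm at h
  rw [List.mem_filterMap] at h
  obtain ⟨l, hl, h⟩ := h
  cases l with
  | inl j => simp only [mention] at h; split_ifs at h with e; subst e; exact hl
  | inr B => simp only [mention] at h; split_ifs at h; simp at h

theorem real_right {n : ℕ} {x : Fin n → ℕ} {l : Lab n} (h : 0 < (real x l).1) :
    ∃ B, l = Sum.inr B := by
  cases l with
  | inl j => simp [real] at h
  | inr B => exact ⟨B, rfl⟩

theorem bool_aux (P Q : List Bool) (q : Bool)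
    (h : P ++ false :: q :: Q = [] ∨ P ++ false :: q :: Q = [true, false]) : False := by
  rcases h with h | h
  · simp at h
  · rcases P with _ | ⟨p, _ | ⟨p', P⟩⟩ <;> simp at h

theorem gp_label {n c d : ℕ} {x : Fin n → ℕ} {σ : List Pt} (h : GP c d σ) :
    ∀ l e, σ = l ++ [e] → e.1 = 0 → e = ((0 : ℤ), -(d : ℤ)) ∧
      ((∀ u ∈ l, u.1 = 0 → ∃ i, u = ((0 : ℤ), -(x i : ℤ))) → (dn l).Nodup →
        ∃ L : List (Lab n), L.map (real x) = l ∧ ValidL L) := by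
  induction h with
  | init σ h =>
    intro l e hl he
    subst h
    obtain ⟨h1, h2⟩ := List.append_inj' hl rfl
    simp at h2
    refine ⟨h2.symm, fun _ _ => ⟨List.replicate c (Sum.inr ∅), ?_, ?_⟩⟩
    · rw [← h1]; simp [real]
    · intro i; left
      simp [fm, mention]
  | cut a u v b hu hv hd hs hg ih =>
    intro l e hl he
    have hv1 := left_turn hu hv hd
    rcases List.eq_nil_or_concat b with rfl | ⟨b', e', rfl⟩
    · exfalso
      have : v = e := by
        have := congrArg List.getLast? hl
        simpa using this
      subst this
      omega
    have hl' : (a ++ u :: v :: b') ++ [e'] = l ++ [e] := by simpa using hl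
    obtain ⟨h1, h2⟩ := List.append_inj' hl' rfl
    simp at h2; subst h2; subst h1
    obtain ⟨i1, i2⟩ := ih (a ++ (u + v) :: b') e' (by simp) he
    refine ⟨i1, ?_⟩
    intro H hnd
    have hb := ((gp_bounds hg).1 (u + v) (by simp)).1
    have hu0 : u.1 = 0 := by
      have := VS_nonneg hu
      simp only [Prod.fst_add] at hb; omega
    have huv : 0 < (u + v).1 := by simp only [Prod.fst_add]; omega
    have e1 : dn (a ++ u :: v :: b') = dn a ++ u :: dn b' := by
      unfold dn
      rw [List.filter_append, List.filter_cons_of_pos (by simpa using hu0),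
        List.filter_cons_of_neg (by simp; omega)]
    have e2 : dn (a ++ (u + v) :: b') = dn a ++ dn b' := by
      unfold dn
      rw [List.filter_append, List.filter_cons_of_neg (by simp; omega)]
    obtain ⟨L, hL, hval⟩ := i2 (by
      intro w hw hw0
      simp only [List.mem_append, List.mem_cons] at hw
      rcases hw with hw | rfl | hw
      · exact H w (by simp [hw]) hw0
      · omega
      · exact H w (by simp [hw]) hw0) (by
      rw [e2]; rw [e1] at hnd
      exact hnd.sublist ((List.Sublist.refl _).append ((List.Sublist.refl _).cons u)))
    obtain ⟨i, hi⟩ := H u (by simp) hu0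
    obtain ⟨La, L2, rfl, hLa, h2⟩ := List.map_eq_append_iff.1 hL
    obtain ⟨lw, Lb, rfl, hlw, hLb⟩ := List.map_eq_cons_iff.1 h2
    obtain ⟨B, rfl⟩ := real_right (x := x) (l := lw) (by rw [hlw]; exact huv)
    have hfi : fm i (La ++ Sum.inr B :: Lb) = [] := by
      rcases hval i with h | h
      · exact h
      · exfalso
        have hm : Sum.inl i ∈ La ++ Sum.inr B :: Lb := mem_of_fm (by rw [h]; simp)
        have hm2 : u ∈ dn a ++ dn b' := by
          rw [← e2]; unfold dn
          rw [List.mem_filter]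
          refine ⟨?_, by simpa using hu0⟩
          rw [← hL, hi]
          exact List.mem_map.2 ⟨_, hm, rfl⟩
        rw [e1] at hnd
        have := List.nodup_middle.1 hnd
        exact (List.nodup_cons.1 this).1 hm2
    rw [fm_append, fm_cons] at hfi
    simp only [List.append_eq_nil_iff] at hfi
    obtain ⟨f1, f2, f3⟩ := hfi
    have hiB : i ∉ B := by
      intro hh; simp [mention, hh] at f2
    refine ⟨La ++ Sum.inl i :: Sum.inr (insert i B) :: Lb, ?_, ?_⟩
    · simp only [List.map_append, List.map_cons, hLa, hLb, real]
      rw [← hi]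
      congr 3
      rw [Finset.sum_insert hiB]
      have g1 := congrArg Prod.fst hlw
      have g2 := congrArg Prod.snd hlw
      simp only [real, Prod.fst_add, Prod.snd_add] at g1 g2
      rw [hi] at g1 g2
      simp only at g1 g2
      ext
      · simp only; omega
      · simp only; omega
    · intro j
      by_cases hj : j = i
      · subst hj
        right
        rw [fm_append, fm_cons, fm_cons, f1, f3]
        simp [mention]
      · have := hval j
        rw [fm_append, fm_cons] at this
        rw [fm_append, fm_cons, fm_cons]
        simpa [mention, hj] using this
  | push a u v b hu hv hd hs hg ih =>
    intro l e hl he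
    have hv1 := left_turn hu hv hd
    rcases List.eq_nil_or_concat b with rfl | ⟨b', e', rfl⟩
    · exfalso
      have : v = e := by
        have := congrArg List.getLast? hl
        simpa using this
      subst this
      omega
    have hl' : (a ++ u :: v :: b') ++ [e'] = l ++ [e] := by simpa using hl
    obtain ⟨h1, h2⟩ := List.append_inj' hl' rfl
    simp at h2; subst h2; subst h1
    obtain ⟨i1, i2⟩ := ih (a ++ v :: u :: b') e' (by simp) he
    refine ⟨i1, ?_⟩
    intro H hnd
    obtain ⟨L, hL, hval⟩ := i2 (by
      intro w hw hw0
      exact H w (by simp at hw ⊢; tauto) hw0) (by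
      refine (List.Perm.nodup_iff ?_).1 hnd
      exact ((List.Perm.swap v u b').append_left a).filter _)
    obtain ⟨La, L2, rfl, hLa, h2⟩ := List.map_eq_append_iff.1 hL
    obtain ⟨lv, L3, rfl, hlv, h3⟩ := List.map_eq_cons_iff.1 h2
    obtain ⟨lu, Lb, rfl, hlu, hLb⟩ := List.map_eq_cons_iff.1 h3
    obtain ⟨B, rfl⟩ := real_right (x := x) (l := lv) (by rw [hlv]; exact hv1)
    refine ⟨La ++ lu :: Sum.inr B :: Lb, by simp [hLa, hLb, hlu, hlv], ?_⟩
    intro j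
    have hj := hval j
    rw [fm_append, fm_cons, fm_cons] at hj ⊢
    by_cases hB : j ∈ B
    · cases hm : mention j lu with
      | none => simpa [hm] using hj
      | some q =>
        exfalso
        rw [hm] at hj
        simp only [mention, hB, if_true] at hj
        exact bool_aux _ _ q hj
    · simpa [mention, hB] using hj

theorem cols {n : ℕ} (L : List (Lab n)) : ∀ (c : ℕ), (L.map (fun l => l.isRight.toNat)).sum = c →
    (∀ i M, L ≠ M ++ [Sum.inl i]) →
    ∃ (A : Fin c → List (Fin n)) (B : Fin c → Finset (Fin n)),
      L = (List.ofFn (fun k => (A k).map Sum.inl ++ [Sum.inr (B k)])).flatten := by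
  induction L with
  | nil =>
    intro c hc _
    simp at hc; subst hc
    exact ⟨fun _ => [], fun _ => ∅, by simp⟩
  | cons l L ih =>
    intro c hc hend
    have hend' : ∀ i M, L ≠ M ++ [Sum.inl i] := by
      intro i M h
      exact hend i (l :: M) (by rw [h]; rfl)
    cases l with
    | inr B0 =>
      obtain ⟨c', rfl⟩ : ∃ c', c = c' + 1 := by
        refine ⟨c - 1, ?_⟩; simp at hc; omega
      obtain ⟨A, B, h⟩ := ih c' (by simp at hc; omega) hend'
      refine ⟨Fin.cons [] A, Fin.cons B0 B, ?_⟩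
      rw [List.ofFn_succ]
      simpa using h
    | inl i =>
      obtain ⟨A, B, h⟩ := ih c (by simpa using hc) hend'
      cases c with
      | zero =>
        exfalso
        simp at h
        exact hend i [] (by rw [h]; rfl)
      | succ c =>
        refine ⟨Fin.cons (i :: A 0) (fun k => A k.succ), B, ?_⟩
        rw [h, List.ofFn_succ, List.ofFn_succ]
        simp

theorem comb {c : ℕ} : ∀ (a : Fin c → ℕ) (b : Fin c → Prop) (ε : Fin c → List Bool),
    (∀ k, (b k ∧ ε k = [false]) ∨ (¬ b k ∧ ε k = [])) →
    (List.ofFn (fun k => List.replicate (a k) true ++ ε k)).flatten = [true, false] →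
    ∀ k, b k → ∃ j ≤ k, 0 < a j := by
  induction c with
  | zero => intro a b ε _ _ k; exact k.elim0
  | succ c ih =>
    intro a b ε hε h k hk
    by_cases ha : 0 < a 0
    · exact ⟨0, Fin.zero_le _, ha⟩
    have ha0 : a 0 = 0 := by omega
    rw [List.ofFn_succ, List.flatten_cons, ha0] at h
    rcases hε 0 with ⟨h1, h2⟩ | ⟨h1, h2⟩
    · rw [h2] at h; simp at h
    · rw [h2] at h
      cases k using Fin.cases with
      | zero => exact absurd hk h1
      | succ k =>
        obtain ⟨j, hj, hj'⟩ := ih (fun k => a k.succ) (fun k => b k.succ) (fun k => ε k.succ)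
          (fun k => hε k.succ) (by simpa using h) k hk
        exact ⟨j.succ, Fin.succ_le_succ_iff.2 hj, hj'⟩

theorem fm_flatten_ofFn {n c : ℕ} (i : Fin n) (f : Fin c → List (Lab n)) :
    fm i (List.ofFn f).flatten = (List.ofFn (fun k => fm i (f k))).flatten := by
  simp [fm, List.filterMap_flatten, List.map_ofFn, Function.comp_def]

theorem fm_col {n : ℕ} (i : Fin n) (A : List (Fin n)) (B : Finset (Fin n)) :
    fm i (A.map Sum.inl ++ [Sum.inr B]) =
      List.replicate (A.count i) true ++ (if i ∈ B then [false] else []) := by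
  rw [fm_append]
  congr 1
  · induction A with
    | nil => simp [fm]
    | cons j A ih =>
      rw [List.map_cons, fm_cons, ih, List.count_cons]
      by_cases h : i = j
      · subst h; simp [mention, List.replicate_succ]
      · have : ¬ (j = i) := fun e => h e.symm
        simp [mention, h, this]
  · by_cases h : i ∈ B <;> simp [fm, mention, h]

theorem admissible {c n : ℕ} (A : Fin c → List (Fin n)) (B : Fin c → Finset (Fin n))
    (h : ∀ i, fm i (List.ofFn (fun k => (A k).map Sum.inl ++ [Sum.inr (B k)])).flatten
      = [true, false])
    (h0 : ∀ k : Fin c, (k : ℕ) = 0 → (B k).Nonempty) : IsAdmissible A B := by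
  have h' : ∀ i, (List.ofFn (fun k => List.replicate ((A k).count i) true ++
      (if i ∈ B k then [false] else []))).flatten = [true, false] := by
    intro i
    rw [← h i, fm_flatten_ofFn]
    simp only [fm_col]
  have hu : ∀ i : Fin n, ∃! k : Fin c, i ∈ B k := by
    intro i
    have := congrArg (List.count false) (h' i)
    rw [List.count_flatten, List.map_ofFn, List.sum_ofFn] at this
    have e : ∀ k, (List.count false ∘ fun k => List.replicate ((A k).count i) true ++
      (if i ∈ B k then [false] else [])) k = if i ∈ B k then 1 else 0 := by
      intro k
      by_cases hk : i ∈ B k <;> simp [hk, List.count_replicate]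
    simp only [e] at this
    rw [← Finset.card_filter] at this
    simp at this
    obtain ⟨k, hk⟩ := Finset.card_eq_one.1 this
    refine ⟨k, ?_, ?_⟩
    · have : k ∈ Finset.univ.filter (fun k => i ∈ B k) := by rw [hk]; simp
      simpa using this
    · intro j hj
      have : j ∈ Finset.univ.filter (fun k => i ∈ B k) := by simpa using hj
      rw [hk] at this; simpa using this
  refine ⟨?_, hu, h0, ?_⟩
  · ext i
    rw [Multiset.coe_count]
    have := congrArg (List.count true) (h' i)
    rw [List.count_flatten, List.map_ofFn, List.sum_ofFn] at this
    have e : ∀ k, (List.count true ∘ fun k => List.replicate ((A k).count i) true ++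
      (if i ∈ B k then [false] else [])) k = (A k).count i := by
      intro k
      by_cases hk : i ∈ B k <;> simp [hk, List.count_replicate]
    simp only [e] at this
    rw [List.count_flatten, List.map_ofFn, List.sum_ofFn]
    simp only [Function.comp]
    rw [this, Multiset.count_eq_one_of_mem Finset.univ.nodup (Finset.mem_univ i)]
    rfl
  · intro k i hi
    rw [Finset.mem_sdiff]
    constructor
    · obtain ⟨j, hj, hj'⟩ := comb (fun k => (A k).count i) (fun k => i ∈ B k)
        (fun k => if i ∈ B k then [false] else [])
        (by intro k; by_cases hk : i ∈ B k <;> simp [hk]) (h' i) k hi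
      simp only [Finset.mem_filter, Finset.mem_univ, true_and]
      exact ⟨j, hj, List.count_pos_iff.1 hj'⟩
    · simp only [Finset.mem_filter, Finset.mem_univ, true_and]
      rintro ⟨j, hj, hj'⟩
      exact absurd ((hu i).unique hj' hi) hj.ne

theorem dn_length (σ : List Pt) (hV : ∀ u ∈ σ, VS u) (h1 : ∀ u ∈ σ, u.1 ≤ 1) :
    (σ.length : ℤ) = (dn σ).length + (σ.map Prod.fst).sum := by
  induction σ with
  | nil => simp [dn]
  | cons u σ ih =>
    have ih := ih (fun w hw => hV w (by simp [hw])) (fun w hw => h1 w (by simp [hw]))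
    have a1 := hV u (by simp)
    have a2 := h1 u (by simp)
    unfold dn at ih ⊢
    unfold VS at a1
    by_cases hu : u.1 = 0
    · rw [List.filter_cons_of_pos (by simpa using hu)]
      simp; omega
    · rw [List.filter_cons_of_neg (by simpa using hu)]
      simp; omega

theorem lab_width {n : ℕ} (x : Fin n → ℕ) (L : List (Lab n)) :
    ((L.map (real x)).map Prod.fst).sum = ((L.map (fun l => l.isRight.toNat)).sum : ℕ) := by
  induction L with
  | nil => simp
  | cons l L ih =>
    cases l <;> simp [real] at ih ⊢ <;> omega

theorem increasing_VS (γ : List Pt) (h : Increasing γ) : ∀ u ∈ steps γ, VS u := by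
  unfold Increasing at h
  induction γ with
  | nil => simp [steps]
  | cons p γ ih =>
    cases γ with
    | nil => simp [steps]
    | cons q γ =>
      have h' := List.isChain_cons_cons.1 h
      rw [steps_cons_cons]
      intro u hu
      rcases List.mem_cons.1 hu with rfl | hu
      · have := h'.1
        unfold lamLT at this
        unfold VS
        simp only [Prod.fst_sub, Prod.snd_sub]
        omega
      · exact ih h'.2 u hu

theorem init_plus {c d : ℕ} (γ : List Pt) (h : InitPlusRect d (Multiset.replicate c 1) {d} γ) :
    IPlus c d (steps γ) := by
  obtain ⟨s, t, hs, ht, rfl⟩ := h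
  rw [steps_pathFrom]
  rw [← Multiset.coe_replicate, Multiset.coe_eq_coe, List.perm_replicate] at hs
  rw [Multiset.coe_eq_singleton] at ht
  subst hs ht
  simp [IPlus, hSteps_eq, dSteps_eq]

theorem init_minus {n c d : ℕ} (x : Fin n → ℕ) (γ : List Pt)
    (h : InitMinusRect d {c} ((List.ofFn x : List ℕ) : Multiset ℕ) γ) :
    IMinus c x (steps γ) := by
  obtain ⟨s, t, hs, ht, rfl⟩ := h
  rw [steps_pathFrom]
  rw [Multiset.coe_eq_singleton] at ht
  subst ht
  exact ⟨s, hs, by simp [hSteps_eq]⟩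

theorem generic_inj {n : ℕ} {x : Fin n → ℕ} (h : Generic x) : Function.Injective x := by
  intro i j hij
  by_contra hne
  refine h {i} {j} (by simpa using hne) (by simpa using hij)

theorem down_perm {n c : ℕ} (hc : 0 < c) (x : Fin n → ℕ) (hx : ∀ i, 0 < x i)
    (l : List Pt) (hl : (dn l).length = n) (hg : GM c x (l ++ [((0 : ℤ), -((∑ i, x i : ℕ) : ℤ))]))
    (u : Pt) (t : List Pt) (hu : l = u :: t) (hu0 : u.1 = 0) :
    (dSteps (List.ofFn x)).Perm (dn l) := by
  have hs := gm_dn hc hg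
  have e : dn (l ++ [((0 : ℤ), -((∑ i, x i : ℕ) : ℤ))])
      = dn l ++ [((0 : ℤ), -((∑ i, x i : ℕ) : ℤ))] := by
    unfold dn
    rw [List.filter_append, List.filter_cons_of_pos (by simp)]; simp
  rw [e] at hs
  have hlen : (dSteps (List.ofFn x)).length = n := by simp [dSteps_eq]
  suffices hss : (dSteps (List.ofFn x)).Subperm (dn l) from
    hss.perm_of_length_le (by omega)
  by_cases hD : ((0 : ℤ), -((∑ i, x i : ℕ) : ℤ)) ∈ dSteps (List.ofFn x)
  · rw [dSteps_eq] at hD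
    simp only [List.mem_map, List.mem_ofFn, Prod.mk.injEq, true_and, neg_inj] at hD
    obtain ⟨k, ⟨i, rfl⟩, hk⟩ := hD
    have hk' : x i = ∑ i, x i := by exact_mod_cast hk
    have hall : ∀ j, j = i := by
      intro j
      by_contra hne
      have := Finset.sum_le_sum_of_subset (f := x) (Finset.subset_univ {i, j})
      rw [Finset.sum_pair (Ne.symm hne)] at this
      have := hx j
      omega
    have hn1 : n = 1 := by
      have : Fintype.card (Fin n) = 1 := Fintype.card_eq_one_iff.2 ⟨i, hall⟩
      simpa using this
    subst hn1
    obtain ⟨j, hj⟩ := gm_first hc hg u (t ++ [((0 : ℤ), -((∑ i, x i : ℕ) : ℤ))])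
      (by rw [hu]; rfl) hu0
    have hmem : u ∈ dn l := by
      unfold dn; rw [hu, List.mem_filter]; simp [hu0]
    have : dSteps (List.ofFn x) = [u] := by
      rw [dSteps_eq, hj]
      have : j = 0 := Subsingleton.elim _ _
      simp [this]
    rw [this]
    exact List.singleton_subperm_iff.2 hmem
  · have h1 : ((dSteps (List.ofFn x) : List Pt) : Multiset Pt) ≤
        ((0 : ℤ), -((∑ i, x i : ℕ) : ℤ)) ::ₘ ((dn l : List Pt) : Multiset Pt) := by
      rw [Multiset.cons_coe, Multiset.coe_le]
      exact hs.trans (List.perm_append_singleton _ _).subperm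
    rw [Multiset.le_cons_of_notMem (by simpa using hD)] at h1
    exact Multiset.coe_le.1 h1

/-- Every path with nonzero multiplicity in the rectangle with boundary
data `μ₁ = (c)`, `μ₂ = (1,…,1)`, `ν₁ = (x₁,…,xₙ)`, `ν₂ = (d)` (for generic `x`) equals
`γ(A,B)` for some admissible pair `(A,B)`. -/
theorem nonzero_path_eq_gammaAB (c n : ℕ) (hc : 0 < c) (hn : 0 < n)
    (x : Fin n → ℕ) (hx : ∀ i, 0 < x i) (hgen : Generic x)
    (γ : List Pt) (hγ : IsPathRect c (∑ i, x i) γ) (hlen : γ.length = n + c + 2)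
    (hmult : multRect c (∑ i, x i) {c} (Multiset.replicate c 1)
        ((List.ofFn x : List ℕ) : Multiset ℕ) {∑ i, x i} γ ≠ 0) :
    ∃ (A : Fin c → List (Fin n)) (B : Fin c → Finset (Fin n)),
      IsAdmissible A B ∧ γ = gammaAB x A B := by
  obtain ⟨hinc, hhead, hlast, hins⟩ := hγ
  unfold multRect at hmult
  have hplus : multPlusRect c (∑ i, x i) (Multiset.replicate c 1) {∑ i, x i} γ ≠ 0 :=
    left_ne_zero_of_mul hmult
  have hminus := right_ne_zero_of_mul hmult
  obtain ⟨m1, hm1, hm1'⟩ := multOf_ne hplus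
  obtain ⟨m2, hm2, hm2'⟩ := multOf_ne hminus
  have hΔ : ∀ z ∈ rect c (∑ i, x i), 0 ≤ z.2 := fun z hz => hz.2.2.1
  have hV := increasing_VS γ hinc
  have gP : GP c (∑ i, x i) (steps γ) :=
    bridge hΔ init_plus hm1 hm1' hins _ hlast rfl hV
  have gM : GM c x (steps γ) :=
    bridge hΔ (init_minus x) hm2 hm2' hins _ hlast rfl hV
  obtain ⟨t, rfl⟩ : ∃ t, γ = (0, ((∑ i, x i : ℕ) : ℤ)) :: t := by
    cases γ with
    | nil => simp at hhead
    | cons p t => simp at hhead; exact ⟨t, by rw [hhead]; simp⟩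
  have hslen := steps_length (0, ((∑ i, x i : ℕ) : ℤ)) t
  have hpf := pathFrom_steps (0, ((∑ i, x i : ℕ) : ℤ)) t
  have htlen : t.length = n + c + 1 := by simpa using hlen
  -- bound on the first step
  have hfirst : ∀ u r, steps ((0, ((∑ i, x i : ℕ) : ℤ)) :: t) = u :: r → u.2 ≤ 0 := by
    intro u r hu
    cases t with
    | nil => simp at htlen
    | cons q t =>
      rw [steps_cons_cons] at hu
      have h1 := (hins q (by simp)).2.2.2
      simp only [List.cons.injEq] at hu
      rw [← hu.1]
      simp only [Prod.snd_sub]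
      omega
  have hlaststep : ∀ l e, steps ((0, ((∑ i, x i : ℕ) : ℤ)) :: t) = l ++ [e] → e.2 ≤ 0 := by
    intro l e he
    rcases List.eq_nil_or_concat t with rfl | ⟨t', z, rfl⟩
    · simp at htlen
    rcases List.eq_nil_or_concat t' with rfl | ⟨t'', w, rfl⟩
    · simp at htlen; omega
    have e1 : (0, ((∑ i, x i : ℕ) : ℤ)) :: (t'' ++ [w] ++ [z])
        = ((0, ((∑ i, x i : ℕ) : ℤ)) :: t'') ++ w :: [z] := by simp
    rw [List.concat_eq_append, List.concat_eq_append, e1] at he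
    rw [List.concat_eq_append, List.concat_eq_append, e1] at hlast hins
    rw [steps_append, steps_cons_cons] at he
    have h2 : e = z - w := by
      have := congrArg List.getLast? he
      simpa [steps] using this.symm
    have h3 : z = ((c : ℤ), 0) := by
      have := hlast
      rw [List.getLast?_append] at this
      simpa using this
    have h4 := (hins w (by simp)).2.2.1
    rw [h2, h3]
    simp only [Prod.snd_sub]
    omega
  generalize hσ : steps ((0, ((∑ i, x i : ℕ) : ℤ)) :: t) = σ at *
  have hlne : σ.length ≠ c + 1 := by omega
  obtain ⟨hb, hw⟩ := gp_bounds gP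
  rcases List.eq_nil_or_concat σ with rfl | ⟨l, e, rfl⟩
  · simp at hslen; omega
  rw [List.concat_eq_append] at *
  -- the last step is the full right edge
  have he0 : e.1 = 0 := by
    by_contra hne
    have a1 := hV e (by simp)
    have a2 := hb e (by simp)
    have a3 := hlaststep l e rfl
    have hpos : 0 < e.1 := by unfold VS at a1; omega
    have : e = (1, 0) := by
      have := a2.2 hpos
      ext <;> simp <;> omega
    subst this
    exact gp_c1 gP hV hlne (by simp) (gm_last gM l rfl)
  obtain ⟨rfl, hlab⟩ := gp_label (x := x) gP l e rfl he0
  cases l with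
  | nil => simp at hslen; omega
  | cons u r =>
  have hu0 : u.1 = 0 := by
    by_contra hne
    have a1 := hV u (by simp)
    have a2 := hb u (by simp)
    have a3 := hfirst u _ rfl
    have hpos : 0 < u.1 := by unfold VS at a1; omega
    have : u = (1, 0) := by
      have := a2.2 hpos
      ext <;> simp <;> omega
    subst this
    exact gp_c1 gP hV hlne (by simp)
      (gm_slope gM (1, 0) (by simp [fr]) (Or.inr ⟨rfl, rfl⟩))
  generalize hl : u :: r = l at *
  have hdl : (dn l).length = n := by
    have h1 := dn_length _ hV (fun w hw' => (hb w hw').1)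
    rw [hw] at h1
    have e : dn (l ++ [((0 : ℤ), -((∑ i, x i : ℕ) : ℤ))])
        = dn l ++ [((0 : ℤ), -((∑ i, x i : ℕ) : ℤ))] := by
      unfold dn
      rw [List.filter_append, List.filter_cons_of_pos (by simp)]; simp
    rw [e, hslen, htlen] at h1
    simp at h1; omega
  have hperm := down_perm hc x hx l hdl gM u r hl.symm hu0
  have hinj := generic_inj hgen
  obtain ⟨L, hL, hval⟩ := hlab (by
    intro w hw' hw0
    have : w ∈ dn l := by unfold dn; rw [List.mem_filter]; simp [hw', hw0]
    rw [← hperm.mem_iff, dSteps_eq] at this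
    simp only [List.mem_map, List.mem_ofFn] at this
    obtain ⟨k, ⟨i, rfl⟩, hk⟩ := this
    exact ⟨i, hk.symm⟩) (by
    rw [← hperm.nodup_iff, dSteps_eq]
    refine List.Nodup.map ?_ (List.nodup_ofFn.2 hinj)
    intro a b hab
    simpa using hab)
  have hval' : ∀ i, fm i L = [true, false] := by
    intro i
    rcases hval i with h | h
    · exfalso
      have h1 : ((0 : ℤ), -(x i : ℤ)) ∈ dn l := by
        rw [← hperm.mem_iff, dSteps_eq]
        simp only [List.mem_map, List.mem_ofFn]
        exact ⟨x i, ⟨i, rfl⟩, rfl⟩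
      unfold dn at h1
      have h2 := (List.mem_filter.1 h1).1
      rw [← hL, List.mem_map] at h2
      obtain ⟨w, hw1, hw2⟩ := h2
      have : w = Sum.inl i := by
        cases w with
        | inl j =>
          simp [real] at hw2
          rw [hinj hw2]
        | inr B => simp [real] at hw2
      subst this
      have : true ∈ fm i L := by
        unfold fm
        rw [List.mem_filterMap]
        exact ⟨_, hw1, by simp [mention]⟩
      rw [h] at this
      simp at this
    · exact h
  have hcount : (L.map (fun l => l.isRight.toNat)).sum = c := by
    have h1 := lab_width x L
    rw [hL] at h1
    simp at hw
    rw [hw] at h1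
    exact_mod_cast h1.symm
  obtain ⟨A, B, hAB⟩ := cols L c hcount (by
    rintro i M rfl
    have := congrArg List.getLast? (hval' i)
    rw [fm_append] at this
    simp [fm, mention] at this)
  refine ⟨A, B, admissible A B (by rw [← hAB]; exact hval') ?_, ?_⟩
  · intro k hk
    by_contra hne
    rw [Finset.not_nonempty_iff_eq_empty] at hne
    obtain ⟨c, rfl⟩ : ∃ c', c = c' + 1 := ⟨c - 1, by omega⟩
    have hk0 : k = 0 := Fin.ext hk
    subst hk0
    rw [List.ofFn_succ, List.flatten_cons, hne] at hAB
    have hf : (((A 0).map Sum.inl).map (real x)).find? (fun u => decide (0 < u.1)) = none := by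
      simp [real]
    have hfr : fr (l ++ [((0 : ℤ), -((∑ i, x i : ℕ) : ℤ))]) = some (1, 0) := by
      unfold fr
      rw [← hL, hAB, List.map_append, List.map_append, List.find?_append, List.find?_append,
        List.find?_append, hf]
      simp [real]
    refine gp_c1 gP hV hlne ?_ (gm_slope gM (1, 0) hfr (Or.inr ⟨rfl, rfl⟩))
    exact List.mem_of_find?_eq_some hfr
  · rw [← hpf]
    unfold gammaAB
    congr 2
    rw [← hL, hAB, List.map_flatten, List.map_ofFn]
    congr 2
    funext k
    simp [colSteps, real]

end TropPaths
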